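/- Let (W,U,N) be a polarity, ε an order type over n, f : W^ε(1) × ⋯ × W^ε(n) → W a function admitting residual functions h_i as in the context, and R the relation defined by (u, w̄) ∈ R iff (f(w̄), u) ∈ N. Then for every u ∈ U and every tuple w̄: R⁰[{w̄}] = ({f(w̄)})↑, and for each 1 ≤ i ≤ n, Rⁱ[{u}, {w̄}ⁱ] equals ({h_i(w̄ⁱ,u)})↓ if ε(i) = 1 and equals ({h_i(w̄ⁱ,u)})↑ if ε(i) = ∂. In particular all these sets are Galois-stable, so R is an f-type relation with order type ε. (Content of Proposition 4.3 for functional relations with order type ε.) -/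

import Mathlib

universe u

/-- For `X ⊆ W`, `up N X = X↑ = {u ∈ U : N x u for all x ∈ X}`. -/
def up {W U : Type u} (N : W → U → Prop) (X : Set W) : Set U := {u | ∀ x ∈ X, N x u}

/-- For `Y ⊆ U`, `dn N Y = Y↓ = {w ∈ W : N w u for all u ∈ Y}`. -/
def dn {W U : Type u} (N : W → U → Prop) (Y : Set U) : Set W := {w | ∀ u ∈ Y, N w u}

/-- A subset `X ⊆ W` is Galois-stable if `X = (X↑)↓`. -/
def stableW {W U : Type u} (N : W → U → Prop) (X : Set W) : Prop := X = dn N (up N X)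

/-- A subset `Y ⊆ U` is Galois-stable if `Y = (Y↓)↑`. -/
def stableU {W U : Type u} (N : W → U → Prop) (Y : Set U) : Prop := Y = up N (dn N Y)

/-- `coordType W U b` is `W` if `b = true` (order type 1) and `U` if `b = false` (order type ∂). -/
def coordType (W U : Type u) (b : Bool) : Type u := cond b W U

/-- `S⁰[C̄] = {a : (a, b̄) ∈ S for all b̄ ∈ C₁ × ⋯ × Cₙ}`. -/
def rel0 {A : Type u} {n : ℕ} {B : Fin n → Type u} (S : A → (∀ i, B i) → Prop)
    (C : ∀ i, Set (B i)) : Set A :=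
  {a | ∀ b : ∀ i, B i, (∀ i, b i ∈ C i) → S a b}

/-- `Sⁱ[A', C̄ⁱ] = {x ∈ B i : (a, b̄ⁱ_x) ∈ S for all a ∈ A' and all b_j ∈ C_j (j ≠ i)}`
(the `i`-th entry of `C` is ignored). -/
def reli {A : Type u} {n : ℕ} {B : Fin n → Type u} (S : A → (∀ i, B i) → Prop)
    (i : Fin n) (A' : Set A) (C : ∀ j, Set (B j)) : Set (B i) :=
  {x | ∀ a ∈ A', ∀ b : ∀ j, B j, (∀ j, j ≠ i → b j ∈ C j) → S a (Function.update b i x)}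

/-- Galois-stability for a subset of `W^ε(i)` (as a subset of `W` or of `U` accordingly). -/
def coordStable {W U : Type u} (N : W → U → Prop) :
    (b : Bool) → Set (coordType W U b) → Prop
  | true, X => stableW N X
  | false, Y => stableU N Y

/-- `R` is an f-type relation with order type `ε`: `R ⊆ U × W^ε(1) × ⋯ × W^ε(n)` such that the
sets `R⁰[{w̄}]` and `Rⁱ[{u}, {w̄}ⁱ]` are all Galois-stable. -/
def isFType {W U : Type u} (N : W → U → Prop) {n : ℕ} (ε : Fin n → Bool)
    (R : U → (∀ i, coordType W U (ε i)) → Prop) : Prop :=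
  (∀ w : ∀ i, coordType W U (ε i),
    stableU N (rel0 R fun i => ({w i} : Set (coordType W U (ε i))))) ∧
  (∀ (u : U) (w : ∀ i, coordType W U (ε i)) (i : Fin n),
    coordStable N (ε i) (reli R i {u} fun j => ({w j} : Set (coordType W U (ε j)))))

/-- `pairN N (ε i) w h` is `(w_i, h_i(w̄ⁱ,u)) ∈ N` if `ε(i) = 1`, and `(h_i(w̄ⁱ,u), w_i) ∈ N`
if `ε(i) = ∂`. -/
def pairN {W U : Type u} (N : W → U → Prop) :
    (b : Bool) → coordType W U b → coordType U W b → Prop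
  | true, w, v => N w v
  | false, v, w => N w v

/-- The Galois-stable set `{h_i(w̄ⁱ,u)}↓` (if `ε(i) = 1`) or `{h_i(w̄ⁱ,u)}↑` (if `ε(i) = ∂`). -/
def singF {W U : Type u} (N : W → U → Prop) :
    (b : Bool) → coordType U W b → Set (coordType W U b)
  | true, v => dn N {v}
  | false, w => up N {w}

section GaloisStable

variable {W U : Type u} {N : W → U → Prop}

theorem stableW_iff_isExtent {X : Set W} : stableW N X ↔ Order.IsExtent N X :=
  eq_comm.trans Order.isExtent_iff.symm

theorem stableU_iff_isIntent {Y : Set U} : stableU N Y ↔ Order.IsIntent N Y :=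
  eq_comm.trans Order.isIntent_iff.symm

theorem stableW_dn (Y : Set U) : stableW N (dn N Y) :=
  stableW_iff_isExtent.2 Order.isExtent_lowerPolar

theorem stableU_up (X : Set W) : stableU N (up N X) :=
  stableU_iff_isIntent.2 Order.isIntent_upperPolar

theorem mem_dn_singleton {w : W} {v : U} : w ∈ dn N {v} ↔ N w v :=
  mem_lowerPolar_singleton N

theorem mem_up_singleton {w : W} {v : U} : v ∈ up N {w} ↔ N w v :=
  mem_upperPolar_singleton N

theorem coordStable_singF : ∀ (b : Bool) (v : coordType U W b), coordStable N b (singF N b v)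
  | true, v => stableW_dn {v}
  | false, w => stableU_up {w}

theorem mem_singF_iff_pairN : ∀ {b : Bool} {v : coordType U W b} {x : coordType W U b},
    x ∈ singF N b v ↔ pairN N b x v
  | true, _, _ => mem_dn_singleton
  | false, _, _ => mem_up_singleton

end GaloisStable

section RelationSections

variable {A : Type u} {n : ℕ} {B : Fin n → Type u} {S : A → (∀ i, B i) → Prop}

theorem mem_rel0_singleton {w : ∀ i, B i} {a : A} :
    a ∈ rel0 S (fun i => {w i}) ↔ S a w := by
  simp [rel0, ← funext_iff]

theorem mem_reli_singleton {i : Fin n} {A' : Set A} {w : ∀ j, B j} {x : B i} :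
    x ∈ reli S i A' (fun j => {w j}) ↔ ∀ a ∈ A', S a (Function.update w i x) := by
  refine ⟨fun hx a ha => hx a ha w fun _ _ => rfl, fun hx a ha b hb => ?_⟩
  have update_eq : Function.update b i x = Function.update w i x :=
    Function.update_eq_iff.2 ⟨by simp, fun j hj => by simpa [hj] using hb j hj⟩
  exact update_eq ▸ hx a ha

end RelationSections

section FunctionalRelation

variable {W U : Type u} {N : W → U → Prop} {n : ℕ}

/-- The functional relation of `f` in the polarity `(W, U, N)`: the relation `R` of the paper with
`(u, w̄) ∈ R` iff `(f(w̄), u) ∈ N`. -/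
def FunctionalRel {B : Fin n → Type u} (N : W → U → Prop) (f : (∀ i, B i) → W) (u : U)
    (w : ∀ i, B i) : Prop :=
  N (f w) u

theorem rel0_functionalRel {B : Fin n → Type u} (f : (∀ i, B i) → W) (w : ∀ i, B i) :
    rel0 (FunctionalRel N f) (fun i => {w i}) = up N {f w} := by
  ext u
  rw [mem_rel0_singleton, mem_up_singleton, FunctionalRel]

variable {ε : Fin n → Bool}

/-- `g` is an `i`-th residual function `h_i` of `f`. The tuple `w̄ⁱ` is encoded as a function
on the subtype of indices `j ≠ i`, so that `g` cannot depend on the `i`-th entry. -/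
def IsResidual (N : W → U → Prop) (f : (∀ i, coordType W U (ε i)) → W) (i : Fin n)
    (g : (∀ j : {j : Fin n // j ≠ i}, coordType W U (ε j)) → U → coordType U W (ε i)) : Prop :=
  ∀ w u, N (f w) u ↔ pairN N (ε i) (w i) (g (fun j => w j) u)

variable {f : (∀ i, coordType W U (ε i)) → W} {i : Fin n}
  {g : (∀ j : {j : Fin n // j ≠ i}, coordType W U (ε j)) → U → coordType U W (ε i)}

theorem IsResidual.rel_update_iff
    (hg : IsResidual N f i g) (w : ∀ j, coordType W U (ε j)) (u : U) (x : coordType W U (ε i)) :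
    N (f (Function.update w i x)) u ↔ pairN N (ε i) x (g (fun j => w j) u) := by
  have restrict_update : (fun j : {j : Fin n // j ≠ i} => Function.update w i x j) =
      fun j : {j : Fin n // j ≠ i} => w j :=
    funext fun j => Function.update_of_ne j.2 x w
  rw [hg, restrict_update, Function.update_self]

theorem IsResidual.reli_functionalRel
    (hg : IsResidual N f i g) (u : U) (w : ∀ j, coordType W U (ε j)) :
    reli (FunctionalRel N f) i {u} (fun j => {w j}) = singF N (ε i) (g (fun j => w j) u) := by
  ext x
  simp only [mem_reli_singleton, Set.mem_singleton_iff, forall_eq, mem_singF_iff_pairN,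
    FunctionalRel, hg.rel_update_iff]

theorem isFType_functionalRel (hf : ∀ i, ∃ g, IsResidual N f i g) :
    isFType N ε (FunctionalRel N f) := by
  refine ⟨fun w => ?_, fun u w i => ?_⟩
  · rw [rel0_functionalRel]
    exact stableU_up _
  · obtain ⟨g, hg⟩ := hf i
    rw [hg.reli_functionalRel]
    exact coordStable_singF _ _

end FunctionalRelation

/-- Proposition 4.3 (functional relations, `f` case): if `f` admits residual functions `h_i`,
and `R` is defined by `(u, w̄) ∈ R iff (f(w̄), u) ∈ N`, then `R⁰[{w̄}] = ({f(w̄)})↑`,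
`Rⁱ[{u}, {w̄}ⁱ] = ({h_i(w̄ⁱ,u)})↓` if `ε(i) = 1` and `= ({h_i(w̄ⁱ,u)})↑` if `ε(i) = ∂`; in
particular `R` is an f-type relation with order type `ε`. -/
theorem functional_is_fType {W U : Type u} (N : W → U → Prop) {n : ℕ} (ε : Fin n → Bool)
    (f : (∀ i, coordType W U (ε i)) → W)
    (h : ∀ i : Fin n,
      ((∀ j : {j : Fin n // j ≠ i}, coordType W U (ε j.1)) → U → coordType U W (ε i)))
    (hres : ∀ (i : Fin n) (w : ∀ j, coordType W U (ε j)) (u : U),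
      N (f w) u ↔ pairN N (ε i) (w i) (h i (fun j => w j.1) u)) :
    (∀ w : ∀ i, coordType W U (ε i),
      rel0 (fun (u : U) w' => N (f w') u)
          (fun i => ({w i} : Set (coordType W U (ε i)))) = up N {f w}) ∧
    (∀ (u : U) (w : ∀ i, coordType W U (ε i)) (i : Fin n),
      reli (fun (u' : U) w' => N (f w') u') i {u}
          (fun j => ({w j} : Set (coordType W U (ε j))))
        = singF N (ε i) (h i (fun j => w j.1) u)) ∧
    isFType N ε (fun (u : U) w' => N (f w') u) := by
  have residual (i : Fin n) : IsResidual N f i (h i) := hres i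
  exact ⟨rel0_functionalRel f, fun u w i => (residual i).reli_functionalRel u w,
    isFType_functionalRel fun i => ⟨h i, residual i⟩⟩
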